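/- Let M be a horizontally linked R-module of finite G-dimension. Then rgr(M) = inf{ depth_{R_p}((λM)_p) : p ∈ Spec R, Gdim_{R_p}(M_p) ≠ 0 }. -/

import Mathlib

open CategoryTheory

noncomputable section

universe u

/-- The `i`-th Ext group `Ext^i_R(M,N)`, as a type (with its `R`-module structure). -/
abbrev extM (R : Type u) [CommRing R] (i : ℕ) (M N : Type u) [AddCommGroup M] [Module R M]
    [AddCommGroup N] [Module R N] : Type u :=
  ((Ext R (ModuleCat.{u} R) i).obj (Opposite.op (ModuleCat.of R M))).obj (ModuleCat.of R N)

/-- The `i`-th Tor group `Tor^R_i(M,N)`, as a type. -/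
abbrev torM (R : Type u) [CommRing R] (i : ℕ) (M N : Type u) [AddCommGroup M] [Module R M]
    [AddCommGroup N] [Module R N] : Type u :=
  ((Tor (ModuleCat.{u} R) i).obj (ModuleCat.of R M)).obj (ModuleCat.of R N)

/-- The `i`-th local cohomology `H^i_I(M)`, as a type. -/
abbrev locCoh (R : Type u) [CommRing R] (I : Ideal R) (i : ℕ) (M : Type u) [AddCommGroup M]
    [Module R M] : Type u :=
  (localCohomology I i).obj (ModuleCat.of R M)

/-- A submodule `N ≤ M` is superfluous if `K ⊔ N = ⊤` implies `K = ⊤`. -/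
def Submodule.IsSuperfluous {R M : Type u} [CommRing R] [AddCommGroup M] [Module R M]
    (N : Submodule R M) : Prop :=
  ∀ K : Submodule R M, K ⊔ N = ⊤ → K = ⊤

/-- A minimal projective resolution of `M` by finitely generated projective modules:
each `P i → Ω^i M` is a projective cover (i.e. has superfluous kernel). -/
structure MinRes (R : Type u) [CommRing R] (M : Type u) [AddCommGroup M] [Module R M] where
  P : ℕ → ModuleCat.{u} R
  projective : ∀ i, Module.Projective R (P i)
  finite : ∀ i, Module.Finite R (P i)
  d : (i : ℕ) → (↥(P (i + 1)) →ₗ[R] ↥(P i))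
  ε : ↥(P 0) →ₗ[R] M
  surj : Function.Surjective ε
  exact0 : LinearMap.range (d 0) = LinearMap.ker ε
  exact : ∀ i, LinearMap.range (d (i + 1)) = LinearMap.ker (d i)
  min_eps : (LinearMap.ker ε).IsSuperfluous
  min_d : ∀ i, (LinearMap.ker (d i)).IsSuperfluous

namespace MinRes

variable {R M : Type u} [CommRing R] [AddCommGroup M] [Module R M]

/-- `T k F` is the Auslander-Bridger transpose `𝒯_{k+1} M = Tr Ω^k M`, computed as the
cokernel of `P_k* → P_{k+1}*`. -/
def T (F : MinRes R M) (k : ℕ) : Type u :=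
  (Module.Dual R ↥(F.P (k + 1))) ⧸ LinearMap.range (F.d k).dualMap

instance (F : MinRes R M) (k : ℕ) : AddCommGroup (F.T k) :=
  inferInstanceAs (AddCommGroup ((Module.Dual R ↥(F.P (k + 1))) ⧸
    LinearMap.range (F.d k).dualMap))

instance (F : MinRes R M) (k : ℕ) : Module R (F.T k) :=
  inferInstanceAs (Module R ((Module.Dual R ↥(F.P (k + 1))) ⧸
    LinearMap.range (F.d k).dualMap))

/-- The transpose `Tr M = coker(P₀* → P₁*)` computed from a minimal projective presentation. -/
abbrev Tr (F : MinRes R M) : Type u := F.T 0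

/-- `λM = ΩTr M`, realized as the image of `P₀* → P₁*` for a minimal projective
presentation `P₁ → P₀ → M → 0`. -/
def lambdaMod (F : MinRes R M) : Type u :=
  ↥(LinearMap.range (F.d 0).dualMap)

instance (F : MinRes R M) : AddCommGroup F.lambdaMod :=
  inferInstanceAs (AddCommGroup ↥(LinearMap.range (F.d 0).dualMap))

instance (F : MinRes R M) : Module R F.lambdaMod :=
  inferInstanceAs (Module R ↥(LinearMap.range (F.d 0).dualMap))

end MinRes

/-- `M` is a horizontally linked `R`-module, i.e. `M ≅ λλM`. -/
def IsHorizontallyLinked (R : Type u) [CommRing R] (M : Type u) [AddCommGroup M]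
    [Module R M] : Prop :=
  ∃ (F : MinRes R M) (G : MinRes R F.lambdaMod), Nonempty (G.lambdaMod ≃ₗ[R] M)

/-- `M` and `N` are horizontally linked to each other: `M ≅ λN` and `N ≅ λM`. -/
def MutuallyLinked (A : Type u) [CommRing A] (M N : Type u) [AddCommGroup M] [Module A M]
    [AddCommGroup N] [Module A N] : Prop :=
  ∃ (F : MinRes A M) (G : MinRes A N),
    Nonempty (F.lambdaMod ≃ₗ[A] N) ∧ Nonempty (G.lambdaMod ≃ₗ[A] M)

/-- `M` is linked to `N` by the ideal `c`: `c` annihilates both modules and they are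
horizontally linked to each other as `R ⧸ c`-modules. -/
def LinkedBy (R : Type u) [CommRing R] (c : Ideal R) (M N : Type u) [AddCommGroup M]
    [Module R M] [AddCommGroup N] [Module R N] : Prop :=
  ∃ (hM : Module.IsTorsionBySet R M c) (hN : Module.IsTorsionBySet R N c),
    letI := hM.module
    letI := hN.module
    MutuallyLinked (R ⧸ c) M N

/-- A stable module: no nonzero projective direct summand. -/
def IsStableModule (R : Type u) [CommRing R] (M : Type u) [AddCommGroup M] [Module R M] : Prop :=
  ∀ N : Submodule R M, Module.Projective R ↥N → (∃ N' : Submodule R M, IsCompl N N') → N = ⊥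

/-- `M` has G-dimension zero: `M` is finitely generated and reflexive,
and `Ext^i(M,R) = 0 = Ext^i(M*,R)` for all `i > 0`. -/
def IsGDimZero (R : Type u) [CommRing R] (M : Type u) [AddCommGroup M] [Module R M] : Prop :=
  Module.Finite R M ∧ Function.Bijective (Module.Dual.eval R M) ∧
    (∀ i : ℕ, 0 < i → Subsingleton (extM R i M R)) ∧
    (∀ i : ℕ, 0 < i → Subsingleton (extM R i (Module.Dual R M) R))

/-- `M` admits a resolution of length `≤ n` by modules of G-dimension zero. -/
def GDimLE (R : Type u) [CommRing R] : ℕ → ModuleCat.{u} R → Prop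
  | 0, M => IsGDimZero R ↥M
  | n + 1, M =>
    ∃ (G : ModuleCat.{u} R) (f : ↥G →ₗ[R] ↥M), IsGDimZero R ↥G ∧ Function.Surjective f ∧
      GDimLE R n (ModuleCat.of R ↥(LinearMap.ker f))

/-- The G-dimension of `M`: the minimal length of a resolution of `M` by modules of
G-dimension zero (`∞` if there is none). -/
def GDim (R : Type u) [CommRing R] (M : Type u) [AddCommGroup M] [Module R M] : ℕ∞ :=
  sInf {n : ℕ∞ | ∃ k : ℕ, n = k ∧ GDimLE R k (ModuleCat.of R M)}

/-- The reduced grade of `M`: `rgr M = inf{ i > 0 | Ext^i(M,R) ≠ 0 }`. -/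
def rgr (R : Type u) [CommRing R] (M : Type u) [AddCommGroup M] [Module R M] : ℕ∞ :=
  sInf {n : ℕ∞ | ∃ k : ℕ, n = k ∧ 0 < k ∧ ¬ Subsingleton (extM R k M R)}

/-- The grade of `M`: `gr M = inf{ i ≥ 0 | Ext^i(M,R) ≠ 0 }`. -/
def egrade (R : Type u) [CommRing R] (M : Type u) [AddCommGroup M] [Module R M] : ℕ∞ :=
  sInf {n : ℕ∞ | ∃ k : ℕ, n = k ∧ ¬ Subsingleton (extM R k M R)}

/-- `depth_I(M) = inf{ i | Ext^i(R/I, M) ≠ 0 }`; for `I` the maximal ideal of a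
local ring this is the depth of `M`. -/
def edepth (R : Type u) [CommRing R] (I : Ideal R) (M : Type u) [AddCommGroup M]
    [Module R M] : ℕ∞ :=
  sInf {n : ℕ∞ | ∃ k : ℕ, n = k ∧ ¬ Subsingleton (extM R k (R ⧸ I) M)}

/-- The depth of the local ring `R`. -/
def rdepth (R : Type u) [CommRing R] [IsLocalRing R] : ℕ∞ :=
  edepth R (IsLocalRing.maximalIdeal R) R

/-- `depth_{R_p}(M_p)`. -/
def locDepth (R : Type u) [CommRing R] (p : Ideal R) [p.IsPrime] (M : Type u) [AddCommGroup M]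
    [Module R M] : ℕ∞ :=
  edepth (Localization.AtPrime p) (IsLocalRing.maximalIdeal (Localization.AtPrime p))
    (LocalizedModule p.primeCompl M)

/-- `depth R_p`. -/
def locRingDepth (R : Type u) [CommRing R] (p : Ideal R) [p.IsPrime] : ℕ∞ :=
  rdepth (Localization.AtPrime p)

/-- `Gdim_{R_p}(M_p)`. -/
def locGDim (R : Type u) [CommRing R] (p : Ideal R) [p.IsPrime] (M : Type u) [AddCommGroup M]
    [Module R M] : ℕ∞ :=
  GDim (Localization.AtPrime p) (LocalizedModule p.primeCompl M)

/-- `rgr_{R_p}(M_p)`. -/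
def locRgr (R : Type u) [CommRing R] (p : Ideal R) [p.IsPrime] (M : Type u) [AddCommGroup M]
    [Module R M] : ℕ∞ :=
  rgr (Localization.AtPrime p) (LocalizedModule p.primeCompl M)

/-- `dim_{R_p}(M_p)`, the Krull dimension of the support of `M_p` over `R_p`. -/
def locDim (R : Type u) [CommRing R] (p : Ideal R) [p.IsPrime] (M : Type u) [AddCommGroup M]
    [Module R M] : WithBot ℕ∞ :=
  ringKrullDim ((Localization.AtPrime p) ⧸
    Module.annihilator (Localization.AtPrime p) (LocalizedModule p.primeCompl M))

/-- `M` satisfies the condition `S̃_k`: `depth_{R_p}(M_p) ≥ min{k, depth R_p}` for all primes. -/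
def Stilde (R : Type u) [CommRing R] (k : ℕ) (M : Type u) [AddCommGroup M] [Module R M] : Prop :=
  ∀ (p : Ideal R) (_ : p.IsPrime), min (k : ℕ∞) (locRingDepth R p) ≤ locDepth R p M

/-- `M` satisfies Serre's condition `(S_k)`:
`depth_{R_p}(M_p) ≥ min{k, dim_{R_p}(M_p)}` for all primes. -/
def SerreS (R : Type u) [CommRing R] (k : ℕ) (M : Type u) [AddCommGroup M] [Module R M] : Prop :=
  ∀ (p : Ideal R) (_ : p.IsPrime),
    min (k : WithBot ℕ∞) (locDim R p M) ≤ (locDepth R p M : WithBot ℕ∞)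

/-- `M` is a `k`-th syzygy module. -/
def IsKthSyzygy (R : Type u) [CommRing R] : ℕ → ModuleCat.{u} R → Prop
  | 0, _ => True
  | k + 1, M =>
    ∃ (P : ModuleCat.{u} R) (f : ↥M →ₗ[R] ↥P), Module.Projective R ↥P ∧ Module.Finite R ↥P ∧
      Function.Injective f ∧ IsKthSyzygy R k (ModuleCat.of R (↥P ⧸ LinearMap.range f))

/-- The `I`-torsion submodule `Γ_I(M) = { x | I^n x = 0 for some n }`. -/
def gammaTorsion (R : Type u) [CommRing R] (I : Ideal R) (M : Type u) [AddCommGroup M]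
    [Module R M] : Submodule R M where
  carrier := {x | ∃ n : ℕ, ∀ a ∈ I ^ n, a • x = 0}
  zero_mem' := ⟨0, fun a _ => smul_zero a⟩
  add_mem' := by
    rintro x y ⟨n, hn⟩ ⟨m, hm⟩
    exact ⟨n + m, fun a ha => by
      rw [smul_add, hn a (Ideal.pow_le_pow_right (Nat.le_add_right n m) ha),
        hm a (Ideal.pow_le_pow_right (Nat.le_add_left m n) ha), add_zero]⟩
  smul_mem' := by
    rintro c x ⟨n, hn⟩
    exact ⟨n, fun a ha => by rw [smul_comm, hn a ha, smul_zero]⟩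

/-- `N` has finite flat dimension (characterized by uniform vanishing of `Tor`). -/
def HasFiniteFlatDim (R : Type u) [CommRing R] (N : Type u) [AddCommGroup N] [Module R N] : Prop :=
  ∃ n : ℕ, ∀ i : ℕ, n < i → ∀ (M : ModuleCat.{u} R), Subsingleton (torM R i ↥M N)

/-- `N` has finite injective dimension (characterized by uniform vanishing of `Ext`). -/
def HasFiniteInjDim (R : Type u) [CommRing R] (N : Type u) [AddCommGroup N] [Module R N] : Prop :=
  ∃ n : ℕ, ∀ i : ℕ, n < i → ∀ (M : ModuleCat.{u} R), Subsingleton (extM R i ↥M N)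

/-- `K` is a semidualizing `R`-module. -/
def IsSemidualizing (R : Type u) [CommRing R] (K : Type u) [AddCommGroup K] [Module R K] : Prop :=
  Module.Finite R K ∧ Function.Bijective (LinearMap.lsmul R K) ∧
    ∀ i : ℕ, 0 < i → Subsingleton (extM R i K K)

/-- The biduality map `M → Hom(Hom(M,K),K)`. -/
def evalK (R : Type u) [CommRing R] (K M : Type u) [AddCommGroup K] [Module R K]
    [AddCommGroup M] [Module R M] : M →ₗ[R] ((M →ₗ[R] K) →ₗ[R] K) :=
  LinearMap.applyₗ

/-- `M` has `G_K`-dimension zero. -/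
def IsGKDimZero (R : Type u) [CommRing R] (K M : Type u) [AddCommGroup K] [Module R K]
    [AddCommGroup M] [Module R M] : Prop :=
  Module.Finite R M ∧ Function.Bijective (evalK R K M) ∧
    (∀ i : ℕ, 0 < i → Subsingleton (extM R i M K)) ∧
    (∀ i : ℕ, 0 < i → Subsingleton (extM R i (M →ₗ[R] K) K))

/-- `M` admits a resolution of length `≤ n` by modules of `G_K`-dimension zero. -/
def GKDimLE (R : Type u) [CommRing R] (K : Type u) [AddCommGroup K] [Module R K] :
    ℕ → ModuleCat.{u} R → Prop
  | 0, M => IsGKDimZero R K ↥M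
  | n + 1, M =>
    ∃ (G : ModuleCat.{u} R) (f : ↥G →ₗ[R] ↥M), IsGKDimZero R K ↥G ∧ Function.Surjective f ∧
      GKDimLE R K n (ModuleCat.of R ↥(LinearMap.ker f))

/-- The `G_K`-dimension of `M`. -/
def GKDim (R : Type u) [CommRing R] (K M : Type u) [AddCommGroup K] [Module R K]
    [AddCommGroup M] [Module R M] : ℕ∞ :=
  sInf {n : ℕ∞ | ∃ k : ℕ, n = k ∧ GKDimLE R K k (ModuleCat.of R M)}

/-- The grade of a module, `gr_R(M) = grade(Ann_R(M), R) = inf{i | Ext^i(R/Ann M, R) ≠ 0}`. -/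
def grAnn (R : Type u) [CommRing R] (M : Type u) [AddCommGroup M] [Module R M] : ℕ∞ :=
  egrade R (R ⧸ Module.annihilator R M)

/-- The grade of an ideal, `grade(I) = inf{i | Ext^i(R/I, R) ≠ 0}`. -/
def gradeI (R : Type u) [CommRing R] (I : Ideal R) : ℕ∞ :=
  egrade R (R ⧸ I)

/-- The ideal `I` is `G_K`-Gorenstein: `R/I` is `G_K`-perfect and `Ext^{gr I}(R/I, K)` is
cyclic. -/
def IsGKGorensteinIdeal (R : Type u) [CommRing R] (K : Type u) [AddCommGroup K] [Module R K]
    (I : Ideal R) : Prop :=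
  ∃ n : ℕ, grAnn R (R ⧸ I) = (n : ℕ∞) ∧ GKDim R K (R ⧸ I) = (n : ℕ∞) ∧
    ∃ x : extM R n (R ⧸ I) K, Submodule.span R {x} = ⊤

end

section HelpA
variable {R : Type u} [CommRing R]

/-- Vanishing of Ext. -/
def EV (R : Type u) [CommRing R] (i : ℕ) (M N : Type u) [AddCommGroup M] [Module R M]
    [AddCommGroup N] [Module R N] : Prop :=
  ∀ x : Abelian.Ext (ModuleCat.of R M) (ModuleCat.of R N) i, x = 0

variable {M N K G X Y P : Type u} [AddCommGroup M] [Module R M] [AddCommGroup N] [Module R N]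
  [AddCommGroup K] [Module R K] [AddCommGroup G] [Module R G] [AddCommGroup X] [Module R X]
  [AddCommGroup Y] [Module R Y] [AddCommGroup P] [Module R P]

lemma homology_zero_iff (T : ModuleCat.{u} R) (Y : ModuleCat.{u} R) (Q : ProjectiveResolution T) (n : ℕ) :
    Subsingleton ((Q.complex.linearYonedaObj R Y).homology (n+1)) ↔
    ∀ f : Q.complex.X (n+1) ⟶ Y, Q.complex.d (n+2) (n+1) ≫ f = 0 →
      ∃ g : Q.complex.X n ⟶ Y, Q.complex.d (n+1) n ≫ g = f := by
  rw [← ModuleCat.isZero_iff_subsingleton, ← HomologicalComplex.exactAt_iff_isZero_homology,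
    HomologicalComplex.exactAt_iff' _ n (n+1) (n+2) (by simp) (by simp),
    ShortComplex.moduleCat_exact_iff]
  rfl

lemma homology_zero_iff0 (T : ModuleCat.{u} R) (Y : ModuleCat.{u} R) (Q : ProjectiveResolution T) :
    Subsingleton ((Q.complex.linearYonedaObj R Y).homology 0) ↔
    ∀ f : Q.complex.X 0 ⟶ Y, Q.complex.d 1 0 ≫ f = 0 → f = 0 := by
  rw [← ModuleCat.isZero_iff_subsingleton, ← HomologicalComplex.exactAt_iff_isZero_homology,
    HomologicalComplex.exactAt_iff' _ 0 0 1 (by simp) (by simp),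
    ShortComplex.moduleCat_exact_iff]
  constructor
  · intro h f hf
    obtain ⟨g, hg⟩ := h f hf
    rw [← hg]
    have h0 : Q.complex.d 0 0 = 0 := Q.complex.shape _ _ (by simp)
    have h1 : Q.complex.d 0 0 ≫ (show Q.complex.X 0 ⟶ Y from g) = 0 := by
      rw [h0, Limits.zero_comp]
    exact h1
  · intro h f hf
    refine ⟨0, ?_⟩
    rw [h f hf]
    exact map_zero _

lemma extM_iff (i : ℕ) : Subsingleton (extM R i M N) ↔ EV R i M N := by
  let Q := ProjectiveResolution.of (ModuleCat.of R M)
  have e := (Q.isoExt (R := R) i (ModuleCat.of R N)).toLinearEquiv.toEquiv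
  rw [e.subsingleton_congr]
  cases i with
  | zero =>
    rw [homology_zero_iff0]
    constructor
    · intro h x
      obtain ⟨f, hf, rfl⟩ := Q.extMk_surjective x 1 rfl
      obtain rfl := h f hf
      simp
    · intro h f hf
      let g : ModuleCat.of R M ⟶ ModuleCat.of R N := Q.exact₀.desc (by exact f) hf
      have hg : Q.π.f 0 ≫ g = f := Q.exact₀.g_desc _ _
      have := h (Abelian.Ext.mk₀ g)
      rw [Abelian.Ext.mk₀_eq_zero_iff] at this
      rw [← hg, this]
      exact Limits.comp_zero
  | succ n =>
    rw [homology_zero_iff]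
    constructor
    · intro h x
      obtain ⟨f, hf, rfl⟩ := Q.extMk_surjective x (n+2) rfl
      rw [Q.extMk_eq_zero_iff f _ rfl hf n rfl]
      exact h f hf
    · intro h f hf
      rw [← Q.extMk_eq_zero_iff f _ rfl hf n rfl]
      exact h _
end HelpA

section HelpB
variable {R : Type u} [CommRing R]
variable {M N K G X Y P : Type u} [AddCommGroup M] [Module R M] [AddCommGroup N] [Module R N]
  [AddCommGroup K] [Module R K] [AddCommGroup G] [Module R G] [AddCommGroup X] [Module R X]
  [AddCommGroup Y] [Module R Y] [AddCommGroup P] [Module R P]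

/-- postcomposition on Ext -/
noncomputable def pc {i : ℕ} (x : Abelian.Ext (ModuleCat.of R Y) (ModuleCat.of R M) i) (f : M →ₗ[R] N) :
    Abelian.Ext (ModuleCat.of R Y) (ModuleCat.of R N) i :=
  x.comp (Abelian.Ext.mk₀ (ModuleCat.ofHom f)) (add_zero i)

lemma pc_pc {i : ℕ} (x : Abelian.Ext (ModuleCat.of R Y) (ModuleCat.of R M) i) (f : M →ₗ[R] N)
    (g : N →ₗ[R] X) : pc (pc x f) g = pc x (g ∘ₗ f) := by
  simp [pc, ModuleCat.ofHom_comp]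

lemma pc_id {i : ℕ} (x : Abelian.Ext (ModuleCat.of R Y) (ModuleCat.of R M) i) :
    pc x (LinearMap.id) = x := by
  simp [pc]

lemma pc_zero {i : ℕ} (f : M →ₗ[R] N) :
    pc (0 : Abelian.Ext (ModuleCat.of R Y) (ModuleCat.of R M) i) f = 0 := by
  simp [pc]

lemma pc_add_left {i : ℕ} (x y : Abelian.Ext (ModuleCat.of R Y) (ModuleCat.of R M) i) (f : M →ₗ[R] N) :
    pc (x + y) f = pc x f + pc y f := by
  simp [pc]

lemma pc_add {i : ℕ} (x : Abelian.Ext (ModuleCat.of R Y) (ModuleCat.of R M) i) (f g : M →ₗ[R] N) :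
    pc x (f + g) = pc x f + pc x g := by
  simp [pc, ModuleCat.ofHom_add, Abelian.Ext.mk₀_add]

lemma pc_zero_right {i : ℕ} (x : Abelian.Ext (ModuleCat.of R Y) (ModuleCat.of R M) i) :
    pc x (0 : M →ₗ[R] N) = 0 := by
  simp [pc]

lemma pc_sum {i : ℕ} {ι : Type*} (s : Finset ι) (x : Abelian.Ext (ModuleCat.of R Y) (ModuleCat.of R M) i)
    (f : ι → (M →ₗ[R] N)) : pc x (∑ j ∈ s, f j) = ∑ j ∈ s, pc x (f j) := by
  classical
  induction s using Finset.induction_on with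
  | empty => simp [pc_zero_right]
  | insert a s ha ih => rw [Finset.sum_insert ha, Finset.sum_insert ha, pc_add, ih]

lemma pc_sum_left {i : ℕ} {ι : Type*} (s : Finset ι)
    (x : ι → Abelian.Ext (ModuleCat.of R Y) (ModuleCat.of R M) i)
    (f : (M →ₗ[R] N)) : pc (∑ j ∈ s, x j) f = ∑ j ∈ s, pc (x j) f := by
  classical
  induction s using Finset.induction_on with
  | empty => simp [pc_zero]
  | insert a s ha ih => rw [Finset.sum_insert ha, Finset.sum_insert ha, pc_add_left, ih]

lemma pc_smul {i : ℕ} (x : Abelian.Ext (ModuleCat.of R Y) (ModuleCat.of R M) i) (c : R) :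
    pc x (c • LinearMap.id) = c • x := by
  rw [Abelian.Ext.smul_eq_comp_mk₀]
  rfl

lemma smul_ext_zero {i : ℕ} (c : R) (hc : ∀ y : Y, c • y = 0)
    (x : Abelian.Ext (ModuleCat.of R Y) (ModuleCat.of R M) i) : c • x = 0 := by
  have : c • 𝟙 (ModuleCat.of R Y) = 0 := by
    ext y
    exact hc y
  have h2 : c • x = (Abelian.Ext.mk₀ (c • 𝟙 (ModuleCat.of R Y))).comp x (zero_add i) := by
    simp [Abelian.Ext.mk₀_smul]
  rw [h2, this]
  simp

/-- short exact -/
structure SE (f : K →ₗ[R] G) (g : G →ₗ[R] X) : Prop where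
  inj : Function.Injective f
  ex : Function.Exact f g
  surj : Function.Surjective g

lemma SE.comp {f : K →ₗ[R] G} {g : G →ₗ[R] X} (h : SE f g) : g ∘ₗ f = 0 :=
  h.ex.linearMap_comp_eq_zero

noncomputable abbrev SE.sc {f : K →ₗ[R] G} {g : G →ₗ[R] X} (h : SE f g) :
    ShortComplex (ModuleCat.{u} R) :=
  ShortComplex.mk (ModuleCat.ofHom f) (ModuleCat.ofHom g) (by
    rw [← ModuleCat.ofHom_comp, h.comp]; rfl)

lemma SE.shortExact {f : K →ₗ[R] G} {g : G →ₗ[R] X} (h : SE f g) : h.sc.ShortExact where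
  exact := by
    rw [ShortComplex.moduleCat_exact_iff]
    intro x hx
    exact (h.ex x).1 hx
  mono_f := (ModuleCat.mono_iff_injective _).2 h.inj
  epi_g := (ModuleCat.epi_iff_surjective _).2 h.surj

lemma SE.ker {g : G →ₗ[R] X} (h : Function.Surjective g) : SE (LinearMap.ker g).subtype g :=
  ⟨Subtype.val_injective, by
    intro y; simp, h⟩

variable {f : K →ₗ[R] G} {g : G →ₗ[R] X}

lemma SE.c1 (h : SE f g) {i : ℕ} (h1 : EV R i K Y) (h2 : EV R (i+1) G Y) : EV R (i+1) X Y := by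
  intro x
  obtain ⟨y, rfl⟩ := Abelian.Ext.contravariant_sequence_exact₃ h.shortExact _ x (h2 _) (add_comm 1 i)
  rw [show y = 0 from h1 y]; simp

lemma SE.c2 (h : SE f g) {i : ℕ} (h1 : EV R i G Y) (h2 : EV R (i+1) X Y) : EV R i K Y := by
  intro x
  obtain ⟨y, rfl⟩ := Abelian.Ext.contravariant_sequence_exact₁ h.shortExact _ x (add_comm 1 i) (h2 _)
  rw [show y = 0 from h1 y]; simp

lemma SE.c3 (h : SE f g) (h2 : EV R 1 X Y) (φ : K →ₗ[R] Y) : ∃ ψ : G →ₗ[R] Y, ψ ∘ₗ f = φ := by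
  obtain ⟨y, hy⟩ := Abelian.Ext.contravariant_sequence_exact₁ h.shortExact _
    (Abelian.Ext.mk₀ (ModuleCat.ofHom φ)) (add_comm 1 0) (h2 _)
  obtain ⟨y, rfl⟩ := (Abelian.Ext.mk₀_bijective _ _).2 y
  rw [Abelian.Ext.mk₀_comp_mk₀] at hy
  have := (Abelian.Ext.mk₀_bijective _ _).1 hy
  exact ⟨y.hom, by simpa using congrArg ModuleCat.Hom.hom this⟩

lemma SE.c4 (h : SE f g) (h2 : EV R 1 G Y) (h3 : ∀ φ : K →ₗ[R] Y, ∃ ψ : G →ₗ[R] Y, ψ ∘ₗ f = φ) :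
    EV R 1 X Y := by
  intro x
  obtain ⟨y, rfl⟩ := Abelian.Ext.contravariant_sequence_exact₃ h.shortExact _ x (h2 _) (add_comm 1 0)
  obtain ⟨y, rfl⟩ := (Abelian.Ext.mk₀_bijective _ _).2 y
  obtain ⟨ψ, hψ⟩ := h3 y.hom
  have : y = ModuleCat.ofHom f ≫ ModuleCat.ofHom ψ := by
    ext1; exact hψ.symm
  rw [this, ← Abelian.Ext.mk₀_comp_mk₀, ShortComplex.ShortExact.extClass_comp_assoc]

lemma EV.proj [Module.Projective R P] (i : ℕ) : EV R (i+1) P Y := fun x =>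
  haveI : Projective (ModuleCat.of R P) := inferInstance
  Abelian.Ext.eq_zero_of_projective x

lemma SE.v1 (h : SE f g) {i : ℕ} (h1 : EV R i Y X) (h2 : EV R (i+1) Y G) : EV R (i+1) Y K := by
  intro x
  obtain ⟨y, rfl⟩ := Abelian.Ext.covariant_sequence_exact₁ _ h.shortExact x (h2 _) rfl
  rw [show y = 0 from h1 y]; simp

lemma SE.v2 (h : SE f g) {i : ℕ} (h1 : EV R i Y G) (h2 : EV R (i+1) Y K) : EV R i Y X := by
  intro x
  obtain ⟨y, rfl⟩ := Abelian.Ext.covariant_sequence_exact₃ _ h.shortExact x rfl (h2 _)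
  rw [show y = 0 from h1 y]; simp

lemma EV.zero_iff : EV R 0 Y X ↔ ∀ φ : Y →ₗ[R] X, φ = 0 := by
  constructor
  · intro h φ
    have := h (Abelian.Ext.mk₀ (ModuleCat.ofHom φ))
    rw [Abelian.Ext.mk₀_eq_zero_iff] at this
    exact congrArg ModuleCat.Hom.hom this
  · intro h x
    obtain ⟨y, rfl⟩ := (Abelian.Ext.mk₀_bijective _ _).2 x
    rw [Abelian.Ext.mk₀_eq_zero_iff]
    ext1
    exact h _

lemma pc_inj0 (hf : Function.Injective f) (x : Abelian.Ext (ModuleCat.of R Y) (ModuleCat.of R K) 0)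
    (hx : pc x f = 0) : x = 0 := by
  have : Mono (ModuleCat.ofHom f) := (ModuleCat.mono_iff_injective _).2 hf
  apply Abelian.Ext.postcomp_mk₀_injective_of_mono _ (ModuleCat.ofHom f)
  rw [map_zero]
  exact hx

lemma SE.v3 (h : SE f g) (h1 : EV R 0 Y G) : EV R 0 Y K := fun x => pc_inj0 h.inj x (h1 _)

lemma SE.pc_inj (h : SE f g) {i : ℕ} (h1 : EV R i Y X)
    (x : Abelian.Ext (ModuleCat.of R Y) (ModuleCat.of R K) (i+1))
    (hx : pc x f = 0) : x = 0 := by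
  obtain ⟨y, rfl⟩ := Abelian.Ext.covariant_sequence_exact₁ _ h.shortExact x hx rfl
  rw [show y = 0 from h1 y]; simp

lemma SE.pc_inj' (h : SE f g) {i : ℕ} (h1 : ∀ j < i, EV R j Y X)
    (x : Abelian.Ext (ModuleCat.of R Y) (ModuleCat.of R K) i)
    (hx : pc x f = 0) : x = 0 := by
  cases i with
  | zero => exact pc_inj0 h.inj x hx
  | succ i => exact h.pc_inj (h1 i (by omega)) x hx

lemma SE.pc_lift (h : SE f g) {i : ℕ}
    (x : Abelian.Ext (ModuleCat.of R Y) (ModuleCat.of R G) i)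
    (hx : pc x g = 0) : ∃ y : Abelian.Ext (ModuleCat.of R Y) (ModuleCat.of R K) i, pc y f = x :=
  Abelian.Ext.covariant_sequence_exact₂ _ h.shortExact x hx

lemma EV.congr_right (e : M ≃ₗ[R] N) {i : ℕ} (h : EV R i Y M) : EV R i Y N := by
  intro x
  have := h (pc x e.symm.toLinearMap)
  have h2 : pc (pc x e.symm.toLinearMap) e.toLinearMap = x := by
    rw [pc_pc]; simp [pc_id]
  rw [← h2, this, pc_zero]

lemma EV.congr_left (e : M ≃ₗ[R] N) {i : ℕ} (h : EV R i M Y) : EV R i N Y := by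
  intro x
  have := h ((Abelian.Ext.mk₀ (ModuleCat.ofHom e.toLinearMap)).comp x (zero_add i))
  have h2 : (Abelian.Ext.mk₀ (ModuleCat.ofHom e.symm.toLinearMap)).comp
    ((Abelian.Ext.mk₀ (ModuleCat.ofHom e.toLinearMap)).comp x (zero_add i)) (zero_add i) = x := by
    rw [Abelian.Ext.mk₀_comp_mk₀_assoc, ← ModuleCat.ofHom_comp]
    simp
  rw [← h2, this]; simp

end HelpB

section HelpC
variable {A : Type u} [CommRing A]
variable {M N K G X Y P D : Type u} [AddCommGroup M] [Module A M] [AddCommGroup N] [Module A N]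
  [AddCommGroup K] [Module A K] [AddCommGroup G] [Module A G] [AddCommGroup X] [Module A X]
  [AddCommGroup Y] [Module A Y] [AddCommGroup P] [Module A P] [AddCommGroup D] [Module A D]

lemma id_pi (n : ℕ) : (LinearMap.id : (Fin n → A) →ₗ[A] (Fin n → A)) =
    ∑ j, (LinearMap.single A (fun _ => A) j) ∘ₗ (LinearMap.proj j) := by
  ext i k
  simp [Pi.single_apply]

lemma EV.pi {i n : ℕ} (h : EV A i Y A) : EV A i Y (Fin n → A) := by
  intro x
  rw [← pc_id x, id_pi, pc_sum]
  refine Finset.sum_eq_zero fun j _ => ?_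
  rw [← pc_pc, show pc x (LinearMap.proj j) = 0 from h _, pc_zero]

lemma EV.finproj [Module.Finite A P] [Module.Projective A P] {i : ℕ} (h : EV A i Y A) :
    EV A i Y P := by
  obtain ⟨n, f, g, _, _, hfg⟩ := Module.Finite.exists_comp_eq_id_of_projective A P
  intro x
  rw [← pc_id x, ← hfg, ← pc_pc, show pc x g = 0 from (EV.pi h) _, pc_zero]

/-- all higher Ext into the ring vanish -/
def HV (A D : Type u) [CommRing A] [AddCommGroup D] [Module A D] : Prop :=
  ∀ i : ℕ, EV A (i+1) D A

lemma HV.ker {g : G →ₗ[A] X} (hg : Function.Surjective g) (hG : HV A G) (hX : HV A X) :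
    HV A (LinearMap.ker g) := fun i => (SE.ker hg).c2 (hG i) (hX (i+1))

lemma SE.dual {f : K →ₗ[A] G} {g : G →ₗ[A] X} (h : SE f g)
    (hs : Function.Surjective f.dualMap) : SE g.dualMap f.dualMap := by
  refine ⟨LinearMap.dualMap_injective_of_surjective h.surj, ?_, hs⟩
  intro φ
  constructor
  · intro hφ
    have : LinearMap.ker g ≤ LinearMap.ker φ := by
      intro y hy
      obtain ⟨z, rfl⟩ := (h.ex y).1 hy
      exact LinearMap.congr_fun hφ z
    let e := g.quotKerEquivOfSurjective h.surj
    refine ⟨(Submodule.liftQ _ φ this) ∘ₗ e.symm.toLinearMap, ?_⟩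
    ext y
    have : e.symm (g y) = Submodule.Quotient.mk y := by
      rw [LinearEquiv.symm_apply_eq]; rfl
    simp [this]
  · rintro ⟨ψ, rfl⟩
    ext z
    have := h.ex.apply_apply_eq_zero z
    simp [this]

lemma SE.dual' {f : K →ₗ[A] G} {g : G →ₗ[A] X} (h : SE f g)
    (hs : EV A 1 X A) : SE g.dualMap f.dualMap :=
  h.dual fun φ => h.c3 hs φ

lemma depth_dual [IsNoetherianRing A] {t : ℕ} (hW : ∀ j < t, EV A j Y A) (j : ℕ) (hj : j < t) :
    ∀ (D : Type u) [AddCommGroup D] [Module A D] [Module.Finite A D], HV A D →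
      EV A j Y (Module.Dual A D) := by
  induction j with
  | zero =>
    intro D _ _ _ hD
    obtain ⟨n, π, hπ⟩ := Module.Finite.exists_fin' A D
    exact ((SE.ker hπ).dual' (hD 0)).v3 (EV.finproj (hW 0 hj))
  | succ j ih =>
    intro D _ _ _ hD
    obtain ⟨n, π, hπ⟩ := Module.Finite.exists_fin' A D
    exact ((SE.ker hπ).dual' (hD 0)).v1
      (ih (by omega) _ (HV.ker hπ (fun i => EV.proj i) hD)) (EV.finproj (hW _ hj))

/-- the pairing map -/
noncomputable abbrev evp (d : D) : Module.Dual A D →ₗ[A] A := Module.Dual.eval A D d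

lemma id_dual_pi (n : ℕ) : (LinearMap.id : Module.Dual A (Fin n → A) →ₗ[A] _) =
    ∑ j, (LinearMap.toSpanSingleton A (Module.Dual A (Fin n → A)) (LinearMap.proj j)) ∘ₗ
      (evp (Pi.single j 1)) := by
  ext φ k
  simp [LinearMap.sum_apply, Pi.single_apply]

lemma psi_inj [IsNoetherianRing A] [Module.Finite A D] {t : ℕ} (hW : ∀ j < t, EV A j Y A)
    (hD : HV A D)
    (x : Abelian.Ext (ModuleCat.of A Y) (ModuleCat.of A (Module.Dual A D)) t)
    (hx : ∀ d : D, pc x (evp d) = 0) : x = 0 := by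
  obtain ⟨n, π, hπ⟩ := Module.Finite.exists_fin' A D
  have hK := HV.ker hπ (fun i => EV.proj i) hD
  have S := ((SE.ker hπ).dual' (hD 0))
  refine S.pc_inj' (fun j hj => depth_dual hW j hj _ hK) x ?_
  rw [← pc_id (pc x _), id_dual_pi, pc_sum]
  refine Finset.sum_eq_zero fun j _ => ?_
  rw [← pc_pc, pc_pc x]
  have : evp (A := A) (Pi.single j 1) ∘ₗ π.dualMap = evp (π (Pi.single j 1)) := rfl
  rw [this, hx, pc_zero]

lemma psi_surj [IsNoetherianRing A] [Module.Finite A D] {t : ℕ} (hW : ∀ j < t, EV A j Y A)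
    (hD : HV A D)
    (φ : D →ₗ[A] Abelian.Ext (ModuleCat.of A Y) (ModuleCat.of A A) t) :
    ∃ x : Abelian.Ext (ModuleCat.of A Y) (ModuleCat.of A (Module.Dual A D)) t,
      ∀ d : D, pc x (evp d) = φ d := by
  obtain ⟨n, π, hπ⟩ := Module.Finite.exists_fin' A D
  have hK := HV.ker hπ (fun i => EV.proj i) hD
  have S := ((SE.ker hπ).dual' (hD 0))
  let x0 : Abelian.Ext (ModuleCat.of A Y) (ModuleCat.of A (Module.Dual A (Fin n → A))) t :=
    ∑ j, pc (φ (π (Pi.single j 1)))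
      (LinearMap.toSpanSingleton A (Module.Dual A (Fin n → A)) (LinearMap.proj j))
  have hx0 : ∀ q, pc x0 (evp q) = φ (π q) := by
    intro q
    simp only [x0]
    rw [pc_sum_left]
    conv_rhs => rw [pi_eq_sum_univ' q]
    simp only [map_sum, map_smul]
    refine Finset.sum_congr rfl fun j _ => ?_
    rw [pc_pc]
    have : evp q ∘ₗ (LinearMap.toSpanSingleton A (Module.Dual A (Fin n → A)) (LinearMap.proj j)) =
      q j • LinearMap.id := by
      ext; simp
    rw [this, pc_smul]
  have h0 : pc x0 ((LinearMap.ker π).subtype.dualMap) = 0 := by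
    refine psi_inj hW hK _ fun d => ?_
    rw [pc_pc]
    have : evp d ∘ₗ ((LinearMap.ker π).subtype.dualMap) = evp d.1 := rfl
    rw [this, hx0, LinearMap.mem_ker.1 d.2, map_zero]
  obtain ⟨x, hx⟩ := S.pc_lift x0 h0
  refine ⟨x, fun d => ?_⟩
  obtain ⟨q, rfl⟩ := hπ d
  rw [← hx0, ← hx, pc_pc]
  rfl

/-- clean Gdim zero -/
lemma isG_iff : IsGDimZero A M ↔ Module.Finite A M ∧ Function.Bijective (Module.Dual.eval A M) ∧
    HV A M ∧ HV A (Module.Dual A M) := by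
  unfold IsGDimZero HV
  refine and_congr_right fun _ => and_congr_right fun _ => and_congr ?_ ?_
  · constructor
    · intro h i; exact (extM_iff _).1 (h (i+1) (by omega))
    · intro h i hi
      obtain ⟨i, rfl⟩ : ∃ j, i = j + 1 := ⟨i-1, by omega⟩
      exact (extM_iff _).2 (h i)
  · constructor
    · intro h i; exact (extM_iff _).1 (h (i+1) (by omega))
    · intro h i hi
      obtain ⟨i, rfl⟩ : ∃ j, i = j + 1 := ⟨i-1, by omega⟩
      exact (extM_iff _).2 (h i)

lemma lemmaZ {f : K →ₗ[A] G} {g : G →ₗ[A] X} (h : SE f g) (hK : IsGDimZero A K)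
    (hG : IsGDimZero A G) (hs : Function.Surjective f.dualMap) : IsGDimZero A X := by
  rw [isG_iff] at *
  obtain ⟨_, hK1, hK2, hK3⟩ := hK
  obtain ⟨_, hG1, hG2, hG3⟩ := hG
  have S := h.dual hs
  have S2 := S.dual' (hK3 0)
  refine ⟨Module.Finite.of_surjective g h.surj, ?_, ?_, ?_⟩
  · have nat1 : ∀ y, Module.Dual.eval A X (g y) = g.dualMap.dualMap (Module.Dual.eval A G y) :=
      fun y => rfl
    have nat2 : ∀ y, Module.Dual.eval A G (f y) = f.dualMap.dualMap (Module.Dual.eval A K y) :=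
      fun y => rfl
    constructor
    · rw [← LinearMap.ker_eq_bot, LinearMap.ker_eq_bot']
      intro x hx
      obtain ⟨y, rfl⟩ := h.surj x
      rw [nat1] at hx
      obtain ⟨z, hz⟩ := (S2.ex _).1 hx
      obtain ⟨w, rfl⟩ := hK1.2 z
      rw [← nat2] at hz
      rw [← hG1.1 hz]
      exact h.ex.apply_apply_eq_zero w
    · intro z
      obtain ⟨w, rfl⟩ := S2.surj z
      obtain ⟨y, rfl⟩ := hG1.2 w
      exact ⟨g y, nat1 y⟩
  · intro i
    cases i with
    | zero => exact h.c4 (hG2 0) hs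
    | succ i => exact h.c1 (hK2 i) (hG2 (i+1))
  · intro i
    exact S.c2 (hG3 i) (hK3 (i+1))

lemma isG_HV_dual (h : IsGDimZero A M) : HV A (Module.Dual A M) := (isG_iff.1 h).2.2.2

/-- G-dim zero modules have depth at least that of the ring. -/
lemma depth_isG [IsNoetherianRing A] {t : ℕ} (hW : ∀ j < t, EV A j Y A) (hG : IsGDimZero A G)
    (j : ℕ) (hj : j < t) : EV A j Y G := by
  have := hG.1
  exact (depth_dual hW j hj (Module.Dual A G) (isG_HV_dual hG)).congr_right
    (LinearEquiv.ofBijective _ hG.2.1).symm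

lemma surj_key [IsNoetherianRing A] [IsLocalRing A] {t : ℕ}
    (hW : ∀ j < t, EV A j (A ⧸ IsLocalRing.maximalIdeal A) A)
    (hV : ¬ EV A t (A ⧸ IsLocalRing.maximalIdeal A) A) {f : K →ₗ[A] G}
    (hK : IsGDimZero A K) (hG : IsGDimZero A G)
    (hinj : ∀ x : Abelian.Ext (ModuleCat.of A (A ⧸ IsLocalRing.maximalIdeal A)) (ModuleCat.of A K) t,
      pc x f = 0 → x = 0) : Function.Surjective f.dualMap := by
  have := hK.1
  have := hG.1
  by_contra hns
  rw [← LinearMap.range_eq_top] at hns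
  obtain ⟨L, hL, hle⟩ := (eq_top_or_exists_le_coatom (LinearMap.range f.dualMap)).resolve_left hns
  have hsimp : IsSimpleModule A (Module.Dual A K ⧸ L) := isSimpleModule_iff_isCoatom.2 hL
  obtain ⟨I, hI, ⟨e⟩⟩ := isSimpleModule_iff_quot_maximal.1 hsimp
  obtain rfl := IsLocalRing.eq_maximalIdeal hI
  simp only [EV, not_forall] at hV
  obtain ⟨v, hv⟩ := hV
  have hmv : ∀ c ∈ IsLocalRing.maximalIdeal A, c • v = 0 := by
    intro c hc
    refine smul_ext_zero c (fun y => ?_) v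
    obtain ⟨y, rfl⟩ := Ideal.Quotient.mk_surjective y
    rw [← Ideal.Quotient.mk_eq_mk, ← Submodule.Quotient.mk_smul, Submodule.Quotient.mk_eq_zero]
    exact Ideal.mul_mem_right _ _ hc
  let θ : (A ⧸ IsLocalRing.maximalIdeal A) →ₗ[A]
    Abelian.Ext (ModuleCat.of A (A ⧸ IsLocalRing.maximalIdeal A)) (ModuleCat.of A A) t :=
    Submodule.liftQ _ (LinearMap.toSpanSingleton A _ v) (by
      intro c hc
      simpa using hmv c hc)
  let φ := θ ∘ₗ e.toLinearMap ∘ₗ L.mkQ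
  have hφ0 : ∀ d, φ (f.dualMap d) = 0 := by
    intro d
    have : L.mkQ (f.dualMap d) = 0 := by
      rw [Submodule.mkQ_apply, Submodule.Quotient.mk_eq_zero]
      exact hle ⟨d, rfl⟩
    simp only [φ, LinearMap.comp_apply, this, map_zero]
  have hφne : ∃ d, φ d = v := by
    obtain ⟨q, hq⟩ := e.surjective (Submodule.Quotient.mk 1)
    obtain ⟨d, rfl⟩ := L.mkQ_surjective q
    refine ⟨d, ?_⟩
    simp only [φ, LinearMap.comp_apply]
    erw [hq]
    change (LinearMap.toSpanSingleton A _ v) 1 = v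
    simp
  obtain ⟨x, hx⟩ := psi_surj hW (isG_HV_dual hK) φ
  let eK := LinearEquiv.ofBijective (Module.Dual.eval A K) hK.2.1
  let eG := LinearEquiv.ofBijective (Module.Dual.eval A G) hG.2.1
  have h1 : pc (pc x eK.symm.toLinearMap) f = 0 := by
    have h2 : pc (pc (pc x eK.symm.toLinearMap) f) eG.toLinearMap = 0 := by
      refine psi_inj hW (isG_HV_dual hG) _ fun d => ?_
      rw [pc_pc, pc_pc, pc_pc]
      have : ((evp d ∘ₗ eG.toLinearMap) ∘ₗ f) ∘ₗ eK.symm.toLinearMap = evp (f.dualMap d) := by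
        ext z
        obtain ⟨w, rfl⟩ := eK.surjective z
        simp [eG, eK]
      rw [this, hx, hφ0]
    have h3 : pc (pc (pc (pc x eK.symm.toLinearMap) f) eG.toLinearMap) eG.symm.toLinearMap =
        (pc (pc x eK.symm.toLinearMap) f) := by
      rw [pc_pc _ eG.toLinearMap]; simp [pc_id]
    rw [← h3, h2, pc_zero]
  have h4 := hinj _ h1
  have h5 : x = 0 := by
    have : pc (pc x eK.symm.toLinearMap) eK.toLinearMap = x := by
      rw [pc_pc]; simp [pc_id]
    rw [← this, h4, pc_zero]
  obtain ⟨d, hd⟩ := hφne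
  apply hv
  rw [← hd, ← hx, h5, pc_zero]

lemma mainC [IsNoetherianRing A] [IsLocalRing A] {t : ℕ}
    (hW : ∀ j < t, EV A j (A ⧸ IsLocalRing.maximalIdeal A) A)
    (hV : ¬ EV A t (A ⧸ IsLocalRing.maximalIdeal A) A) (g : ℕ) :
    ∀ (X : ModuleCat.{u} A) (s r : ℕ), s + r = t → GDimLE A g X →
      (∀ j < s, EV A j (A ⧸ IsLocalRing.maximalIdeal A) X) →
      (∀ i < r, EV A (i+1) X A) → IsGDimZero A X := by
  induction g with
  | zero => intro X s r _ h _ _; exact h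
  | succ g ih =>
    rintro X s r hsr ⟨G, π, hG, hπ, hK⟩ h1 h2
    have S := SE.ker hπ
    have hGd := fun j hj => depth_isG hW hG j hj
    have hG2 := (isG_iff.1 hG).2.2.1
    cases r with
    | zero =>
      obtain rfl : s = t := by omega
      have hKG : IsGDimZero A (LinearMap.ker π) := by
        refine ih (ModuleCat.of A (LinearMap.ker π)) s 0 rfl hK ?_ (by simp)
        intro j hj
        cases j with
        | zero => exact S.v3 (hGd 0 hj)
        | succ j => exact S.v1 (h1 j (by omega)) (hGd _ hj)
      exact lemmaZ S hKG hG (surj_key hW hV hKG hG (fun x hx => S.pc_inj' h1 x hx))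
    | succ r =>
      have hKG : IsGDimZero A (LinearMap.ker π) := by
        refine ih (ModuleCat.of A (LinearMap.ker π)) (s+1) r (by omega) hK ?_ ?_
        · intro j hj
          cases j with
          | zero => exact S.v3 (hGd 0 (by omega))
          | succ j => exact S.v1 (h1 j (by omega)) (hGd _ (by omega))
        · intro i hi
          exact S.c2 (hG2 i) (h2 (i+1) (by omega))
      exact lemmaZ S hKG hG (fun φ => S.c3 (h2 0 (by omega)) φ)

/-- depth bound -/
lemma depth_bound [IsNoetherianRing A] [IsLocalRing A] {g m : ℕ} (hX : GDimLE A g (ModuleCat.of A X))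
    (hn : ¬ IsGDimZero A X) (hE : ∀ i, i + 1 < m → EV A (i+1) X A) (j : ℕ) (hj : j < m) :
    EV A j (A ⧸ IsLocalRing.maximalIdeal A) A := by
  induction j using Nat.strong_induction_on with
  | _ j ih =>
    by_contra hV
    exact hn (mainC (fun i hi => ih i hi (by omega)) hV g (ModuleCat.of A X) 0 j (by simp) hX
      (by simp) (fun i hi => hE i (by omega)))

end HelpC

section HelpD
variable {A : Type u} [CommRing A]

lemma SE.range {D0 D1 D2 : Type u} [AddCommGroup D0] [Module A D0] [AddCommGroup D1] [Module A D1]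
    [AddCommGroup D2] [Module A D2] {f : D0 →ₗ[A] D1} {g : D1 →ₗ[A] D2} (h : Function.Exact f g) :
    SE (LinearMap.range f).subtype g.rangeRestrict := by
  refine ⟨Subtype.val_injective, ?_, LinearMap.surjective_rangeRestrict g⟩
  intro y
  rw [← Subtype.val_inj]
  simpa using h y

lemma SE.coker {D0 D1 : Type u} [AddCommGroup D0] [Module A D0] [AddCommGroup D1] [Module A D1]
    {f : D0 →ₗ[A] D1} :
    SE (LinearMap.range f).subtype (LinearMap.range f).mkQ := by
  refine ⟨Subtype.val_injective, ?_, Submodule.mkQ_surjective _⟩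
  intro y
  simp

variable {Y : Type u} [AddCommGroup Y] [Module A Y] (D : ℕ → ModuleCat.{u} A)
  (δ : ∀ i, D i →ₗ[A] D (i+1))

lemma cpx_depth (n : ℕ) (hD : ∀ i, ∀ j < n, EV A j Y (D i))
    (hex : ∀ i, i + 1 < n → Function.Exact (δ i) (δ (i+1))) (r : ℕ) :
    ∀ i, i + r + 1 = n → ∀ j < r + 1, EV A j Y (LinearMap.range (δ i)) := by
  induction r with
  | zero =>
    intro i hi j hj
    obtain rfl : j = 0 := by omega
    exact (SE.coker (f := δ i)).v3 (hD _ 0 (by omega))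
  | succ r ih =>
    intro i hi j hj
    have S := SE.range (hex i (by omega))
    cases j with
    | zero => exact S.v3 (hD _ 0 (by omega))
    | succ j => exact S.v1 (ih (i+1) (by omega) j (by omega)) (hD _ _ (by omega))

lemma cpx_depth2 (n : ℕ) (hD : ∀ i, ∀ j < n, EV A j Y (D i))
    (hex : ∀ i, i + 1 < n → Function.Exact (δ i) (δ (i+1)))
    (m : ℕ) (hm : m + 1 = n) (r : ℕ) :
    ∀ i, i + r = m → EV A (r + 1) Y (LinearMap.range (δ i)) →
      EV A 0 Y (D (m+1) ⧸ LinearMap.range (δ m)) := by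
  induction r with
  | zero =>
    intro i hi h
    obtain rfl : i = m := by omega
    exact (SE.coker (f := δ i)).v2 (hD _ 0 (by omega)) h
  | succ r ih =>
    intro i hi h
    have S := SE.range (hex i (by omega))
    exact ih (i+1) (by omega) (S.v2 (hD _ _ (by omega)) h)

/-- factor through surjection -/
lemma factor_surj {G X Z : Type u} [AddCommGroup G] [Module A G] [AddCommGroup X] [Module A X]
    [AddCommGroup Z] [Module A Z] (g : G →ₗ[A] X) (hg : Function.Surjective g) (φ : G →ₗ[A] Z)
    (h : ∀ y, g y = 0 → φ y = 0) : ∃ ψ : X →ₗ[A] Z, ψ ∘ₗ g = φ := by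
  let e := g.quotKerEquivOfSurjective hg
  refine ⟨(Submodule.liftQ _ φ (fun y hy => h y hy)) ∘ₗ e.symm.toLinearMap, ?_⟩
  ext y
  have : e.symm (g y) = Submodule.Quotient.mk y := by
    rw [LinearEquiv.symm_apply_eq]; rfl
  simp only [LinearMap.comp_apply, LinearEquiv.coe_coe, this]
  rfl

lemma res_crit (i : ℕ) : ∀ (P : ℕ → ModuleCat.{u} A) (M : Type u) [AddCommGroup M] [Module A M]
    (_ : ∀ i, Module.Projective A (P i)) (d : ∀ i, P (i+1) →ₗ[A] P i) (ε : P 0 →ₗ[A] M)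
    (_ : Function.Surjective ε) (_ : Function.Exact (d 0) ε)
    (_ : ∀ i, Function.Exact (d (i+1)) (d i)),
    EV A (i+1) M Y ↔ ∀ f : P (i+1) →ₗ[A] Y, f ∘ₗ d (i+1) = 0 → ∃ g : P i →ₗ[A] Y, g ∘ₗ d i = f := by
  induction i with
  | zero =>
    intro P M _ _ hP d ε hε h0 hd
    have S := SE.ker hε
    have hr : ∀ x, d 0 x ∈ LinearMap.ker ε := fun x => h0.apply_apply_eq_zero x
    let d' := (d 0).codRestrict _ hr
    have hd' : Function.Surjective d' := by
      rintro ⟨y, hy⟩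
      obtain ⟨x, rfl⟩ := (h0 y).1 hy
      exact ⟨x, rfl⟩
    constructor
    · intro h f hf
      obtain ⟨φ, hφ⟩ := factor_surj d' hd' f (by
        intro y hy
        obtain ⟨x, rfl⟩ := (hd 0 y).1 (congrArg Subtype.val hy)
        exact LinearMap.congr_fun hf x)
      obtain ⟨g, hg⟩ := S.c3 h φ
      refine ⟨g, ?_⟩
      rw [← hφ, ← hg]
      rfl
    · intro h
      refine S.c4 (EV.proj 0) fun φ => ?_
      obtain ⟨g, hg⟩ := h (φ ∘ₗ d') (by
        ext x
        have : d' (d 1 x) = 0 := Subtype.ext ((hd 0).apply_apply_eq_zero x)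
        simp [this])
      refine ⟨g, ?_⟩
      ext x
      obtain ⟨y, rfl⟩ := hd' x
      exact LinearMap.congr_fun hg y
  | succ i ih =>
    intro P M _ _ hP d ε hε h0 hd
    have S := SE.ker hε
    have hr : ∀ x, d 0 x ∈ LinearMap.ker ε := fun x => h0.apply_apply_eq_zero x
    let d' := (d 0).codRestrict _ hr
    have hd' : Function.Surjective d' := by
      rintro ⟨y, hy⟩
      obtain ⟨x, rfl⟩ := (h0 y).1 hy
      exact ⟨x, rfl⟩
    have := ih (fun j => P (j+1)) (LinearMap.ker ε) (fun j => hP _) (fun j => d (j+1)) d' hd'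
      (fun y => by rw [← hd 0 y]; exact Subtype.ext_iff) (fun j => hd (j+1))
    rw [← this]
    exact ⟨fun h => S.c2 (EV.proj _) h, fun h => S.c1 h (EV.proj _)⟩

/-- resolution criterion in dual form -/
lemma res_crit' (i : ℕ) (P : ℕ → ModuleCat.{u} A) (M : Type u) [AddCommGroup M] [Module A M]
    (hP : ∀ i, Module.Projective A (P i)) (d : ∀ i, P (i+1) →ₗ[A] P i) (ε : P 0 →ₗ[A] M)
    (h1 : Function.Surjective ε) (h2 : Function.Exact (d 0) ε)
    (h3 : ∀ i, Function.Exact (d (i+1)) (d i)) :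
    EV A (i+1) M A ↔ Function.Exact (d i).dualMap (d (i+1)).dualMap := by
  rw [res_crit i P M hP d ε h1 h2 h3]
  constructor
  · intro h f
    refine ⟨fun hf => ?_, ?_⟩
    · obtain ⟨g, hg⟩ := h f hf
      exact ⟨g, hg⟩
    · rintro ⟨g, rfl⟩
      ext x
      have := (h3 i).apply_apply_eq_zero x
      simp [this]
  · intro h f hf
    obtain ⟨g, hg⟩ := (h f).1 hf
    exact ⟨g, hg⟩

end HelpD

section HelpE
variable {R : Type u} [CommRing R] (S : Submonoid R)

section gen
variable {M0 M1 M2 L0 L1 L2 : Type u} [AddCommGroup M0] [Module R M0] [AddCommGroup M1] [Module R M1]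
  [AddCommGroup M2] [Module R M2]
  [AddCommGroup L0] [Module R L0] [Module (Localization S) L0] [IsScalarTower R (Localization S) L0]
  [AddCommGroup L1] [Module R L1] [Module (Localization S) L1] [IsScalarTower R (Localization S) L1]
  [AddCommGroup L2] [Module R L2] [Module (Localization S) L2] [IsScalarTower R (Localization S) L2]
  (f0 : M0 →ₗ[R] L0) [IsLocalizedModule S f0] (f1 : M1 →ₗ[R] L1) [IsLocalizedModule S f1]
  (f2 : M2 →ₗ[R] L2) [IsLocalizedModule S f2]

lemma loc_eq_map {h : M0 →ₗ[R] M1} {h' : L0 →ₗ[Localization S] L1} (hh : ∀ x, h' (f0 x) = f1 (h x)) :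
    (h' : L0 → L1) = IsLocalizedModule.map S f0 f1 h := by
  have : h'.restrictScalars R = IsLocalizedModule.map S f0 f1 h := by
    apply IsLocalizedModule.linearMap_ext S f0 f1
    ext x
    simp [hh]
  rw [← this]
  rfl

lemma loc_ext {h h' : L0 →ₗ[Localization S] L1} (hh : ∀ x, h (f0 x) = h' (f0 x)) : h = h' := by
  ext y
  obtain ⟨⟨x, s⟩, hx⟩ := IsLocalizedModule.surj S f0 y
  have h1 : ∀ k : L0 →ₗ[Localization S] L1, algebraMap R (Localization S) s.1 • k y = k (f0 x) := by
    intro k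
    rw [← map_smul, ← hx]
    congr 1
    rw [algebraMap_smul]; rfl
  have h2 := (h1 h).trans ((hh x).trans (h1 h').symm)
  exact (IsLocalization.map_units (Localization S) s).smul_left_cancel.1 h2

/-- localized map -/
noncomputable def lmap (h : M0 →ₗ[R] M1) : L0 →ₗ[Localization S] L1 :=
  IsLocalizedModule.mapExtendScalars S f0 f1 (Localization S) h

@[simp] lemma lmap_apply (h : M0 →ₗ[R] M1) (x : M0) : lmap S f0 f1 h (f0 x) = f1 (h x) := by
  simp [lmap]

lemma loc_exact {h : M0 →ₗ[R] M1} {h' : L0 →ₗ[Localization S] L1} (hh : ∀ x, h' (f0 x) = f1 (h x))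
    {k : M1 →ₗ[R] M2} {k' : L1 →ₗ[Localization S] L2} (kk : ∀ x, k' (f1 x) = f2 (k x))
    (he : Function.Exact h k) : Function.Exact h' k' := by
  rw [loc_eq_map S f0 f1 hh, loc_eq_map S f1 f2 kk]
  exact IsLocalizedModule.map_exact S f0 f1 f2 h k he

lemma loc_inj {h : M0 →ₗ[R] M1} {h' : L0 →ₗ[Localization S] L1} (hh : ∀ x, h' (f0 x) = f1 (h x))
    (he : Function.Injective h) : Function.Injective h' := by
  rw [loc_eq_map S f0 f1 hh]
  exact IsLocalizedModule.map_injective S f0 f1 h he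

lemma loc_surj {h : M0 →ₗ[R] M1} {h' : L0 →ₗ[Localization S] L1} (hh : ∀ x, h' (f0 x) = f1 (h x))
    (he : Function.Surjective h) : Function.Surjective h' := by
  rw [loc_eq_map S f0 f1 hh]
  exact IsLocalizedModule.map_surjective S f0 f1 h he

/-- map on kernels -/
noncomputable def lker {h : M0 →ₗ[R] M1} {h' : L0 →ₗ[Localization S] L1}
    (hh : ∀ x, h' (f0 x) = f1 (h x)) : LinearMap.ker h →ₗ[R] LinearMap.ker h' where
  toFun x := ⟨f0 x.1, by rw [LinearMap.mem_ker, hh, LinearMap.mem_ker.1 x.2, map_zero]⟩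
  map_add' x y := by ext; simp
  map_smul' r x := by ext; simp

lemma lker_loc {h : M0 →ₗ[R] M1} {h' : L0 →ₗ[Localization S] L1}
    (hh : ∀ x, h' (f0 x) = f1 (h x)) : IsLocalizedModule S (lker S f0 f1 hh) := by
  have := LinearMap.toKerLocalized_isLocalizedModule (Localization S) S f0 f1 h
  have hm := loc_eq_map S f0 f1 hh
  let e : LinearMap.ker (IsLocalizedModule.map S f0 f1 h) ≃ₗ[R] LinearMap.ker h' :=
    { toFun := fun x => ⟨x.1, by rw [LinearMap.mem_ker, hm]; exact x.2⟩
      invFun := fun x => ⟨x.1, by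
        rw [LinearMap.mem_ker, ← hm]; exact x.2⟩
      map_add' := fun _ _ => rfl
      map_smul' := fun _ _ => rfl
      left_inv := fun _ => rfl
      right_inv := fun _ => rfl }
  exact IsLocalizedModule.of_linearEquiv S (LinearMap.toKerIsLocalized S f0 f1 h) e

/-- dual localization -/
noncomputable def dl : Module.Dual R M0 →ₗ[R] Module.Dual (Localization S) L0 :=
  IsLocalizedModule.mapExtendScalars S f0 (Algebra.linearMap R (Localization S)) (Localization S)

@[simp] lemma dl_apply (φ : Module.Dual R M0) (x : M0) :
    dl S f0 φ (f0 x) = algebraMap R (Localization S) (φ x) := by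
  simp [dl]

instance dl_loc [IsNoetherianRing R] [Module.Finite R M0] : IsLocalizedModule S (dl S f0) := by
  have : Module.FinitePresentation R M0 := Module.finitePresentation_of_finite R M0
  exact Module.FinitePresentation.isLocalizedModule_mapExtendScalars S f0 _ _

lemma dl_nat {h : M0 →ₗ[R] M1} {h' : L0 →ₗ[Localization S] L1} (hh : ∀ x, h' (f0 x) = f1 (h x))
    (φ : Module.Dual R M1) : h'.dualMap (dl S f1 φ) = dl S f0 (h.dualMap φ) := by
  apply loc_ext S f0 (L1 := Localization S)
  intro x
  simp [hh]

lemma dual_surj_loc [IsNoetherianRing R] [Module.Finite R M0] [Module.Finite R M1]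
    {h : M0 →ₗ[R] M1} {h' : L0 →ₗ[Localization S] L1} (hh : ∀ x, h' (f0 x) = f1 (h x))
    (hs : Function.Surjective h.dualMap) : Function.Surjective h'.dualMap :=
  loc_surj S (dl S f1) (dl S f0) (fun φ => dl_nat S f0 f1 hh φ) hs

lemma lmap_ex (h : M0 →ₗ[R] M1) : ∃ h' : L0 →ₗ[Localization S] L1, ∀ x, h' (f0 x) = f1 (h x) :=
  ⟨lmap S f0 f1 h, lmap_apply S f0 f1 h⟩

end gen

lemma EV_loc [IsNoetherianRing R] (i : ℕ) : ∀ (M L : Type u) [AddCommGroup M] [Module R M] [Module.Finite R M]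
    [AddCommGroup L] [Module R L] [Module (Localization S) L] [IsScalarTower R (Localization S) L]
    (f : M →ₗ[R] L) [IsLocalizedModule S f],
    EV R (i+1) M R → EV (Localization S) (i+1) L (Localization S) := by
  induction i with
  | zero =>
    intro M L _ _ _ _ _ _ _ f _ h
    obtain ⟨n, π, hπ⟩ := Module.Finite.exists_fin' R M
    let g := LocalizedModule.mkLinearMap S (Fin n → R)
    obtain ⟨π', hh⟩ := lmap_ex S g f π
    have hπ' : Function.Surjective π' := loc_surj S g f hh hπ
    have := lker_loc S g f hh
    have := Module.projective_of_isLocalizedModule (Rₛ := Localization S) S g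
    refine (SE.ker hπ').c4 (EV.proj 0) ?_
    have hs : Function.Surjective (LinearMap.ker π).subtype.dualMap := fun φ => (SE.ker hπ).c3 h φ
    have hs' := dual_surj_loc S (L0 := LinearMap.ker π') (lker S g f hh) g
      (h := (LinearMap.ker π).subtype) (h' := (LinearMap.ker π').subtype) (fun x => rfl) hs
    exact hs'
  | succ i ih =>
    intro M L _ _ _ _ _ _ _ f _ h
    obtain ⟨n, π, hπ⟩ := Module.Finite.exists_fin' R M
    let g := LocalizedModule.mkLinearMap S (Fin n → R)
    obtain ⟨π', hh⟩ := lmap_ex S g f π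
    have hπ' : Function.Surjective π' := loc_surj S g f hh hπ
    have := lker_loc S g f hh
    have := Module.projective_of_isLocalizedModule (Rₛ := Localization S) S g
    refine (SE.ker hπ').c1 ?_ (EV.proj _)
    exact ih (LinearMap.ker π) (LinearMap.ker π') (lker S g f hh) ((SE.ker hπ).c2 (EV.proj _) h)

lemma isG_loc [IsNoetherianRing R] {M L : Type u} [AddCommGroup M] [Module R M]
    [AddCommGroup L] [Module R L] [Module (Localization S) L] [IsScalarTower R (Localization S) L]
    (f : M →ₗ[R] L) [IsLocalizedModule S f] (h : IsGDimZero R M) : IsGDimZero (Localization S) L := by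
  rw [isG_iff] at *
  obtain ⟨h1, h2, h3, h4⟩ := h
  have hh : ∀ x, Module.Dual.eval (Localization S) L (f x) =
      dl S (dl S f) (Module.Dual.eval R M x) := by
    intro x
    apply loc_ext S (dl S f) (L1 := Localization S)
    intro φ
    simp
  refine ⟨Module.Finite.of_isLocalizedModule S f, ⟨?_, ?_⟩, ?_, ?_⟩
  · exact loc_inj S f (dl S (dl S f)) hh h2.1
  · exact loc_surj S f (dl S (dl S f)) hh h2.2
  · exact fun i => EV_loc S i M L f (h3 i)
  · exact fun i => EV_loc S i (Module.Dual R M) (Module.Dual (Localization S) L) (dl S f) (h4 i)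

lemma gdimLE_loc [IsNoetherianRing R] (k : ℕ) : ∀ (M L : Type u) [AddCommGroup M] [Module R M]
    [AddCommGroup L] [Module R L] [Module (Localization S) L] [IsScalarTower R (Localization S) L]
    (f : M →ₗ[R] L) [IsLocalizedModule S f],
    GDimLE R k (ModuleCat.of R M) → GDimLE (Localization S) k (ModuleCat.of (Localization S) L) := by
  induction k with
  | zero => intro M L _ _ _ _ _ _ f _ h; exact isG_loc S f h
  | succ k ih =>
    rintro M L _ _ _ _ _ _ f _ ⟨G, π, hG, hπ, hK⟩
    let g := LocalizedModule.mkLinearMap S G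
    obtain ⟨π', hh⟩ := lmap_ex S g f π
    have := lker_loc S g f hh
    refine ⟨ModuleCat.of (Localization S) (LocalizedModule S G), π', isG_loc S g hG,
      loc_surj S g f hh hπ, ?_⟩
    exact ih (LinearMap.ker π) (LinearMap.ker π') (lker S g f hh) hK

end HelpE

section HelpF
variable {R : Type u} [CommRing R]

lemma finproj_dual {A L Y : Type u} [CommRing A] [AddCommGroup L] [Module A L]
    [AddCommGroup Y] [Module A Y] (hN : IsNoetherianRing A) (h1 : Module.Finite A L)
    (h2 : Module.Projective A L) {j : ℕ} (h : EV A j Y A) : EV A j Y (Module.Dual A L) :=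
  EV.finproj h

lemma ass_ex [IsNoetherianRing R] {D0 D1 D2 : Type u} [AddCommGroup D0] [Module R D0]
    [AddCommGroup D1] [Module R D1] [AddCommGroup D2] [Module R D2] (h : D0 →ₗ[R] D1)
    (k : D1 →ₗ[R] D2) (hk : ∀ x, k (h x) = 0) (hne : ¬ Function.Exact h k) :
    ∃ (p : Ideal R) (_ : p.IsPrime) (c : D1), k c = 0 ∧
      ∀ r : R, r • c ∈ LinearMap.range h ↔ r ∈ p := by
  have hc0 : ∃ c, k c = 0 ∧ c ∉ LinearMap.range h := by
    by_contra! hcon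
    refine hne fun y => ⟨fun hy => hcon y hy, ?_⟩
    rintro ⟨x, rfl⟩
    exact hk x
  obtain ⟨c, hc, hc'⟩ := hc0
  let N : Submodule R (LinearMap.ker k) := (LinearMap.range h).comap (LinearMap.ker k).subtype
  have hN : N ≠ ⊤ := by
    intro hN
    have : (⟨c, hc⟩ : LinearMap.ker k) ∈ N := by rw [hN]; trivial
    exact hc' this
  have : Nontrivial (LinearMap.ker k ⧸ N) := Submodule.Quotient.nontrivial_iff.2 hN
  obtain ⟨p, hp⟩ := associatedPrimes.nonempty R (LinearMap.ker k ⧸ N)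
  obtain ⟨hp, x, hx⟩ := Submodule.isAssociatedPrime_iff.1 hp
  obtain ⟨x, rfl⟩ := N.mkQ_surjective x
  refine ⟨p, hp, x.1, x.2, fun r => ?_⟩
  rw [hx, Submodule.mem_colon_singleton, Submodule.mem_bot, ← map_smul, Submodule.mkQ_apply,
    Submodule.Quotient.mk_eq_zero]
  rfl

lemma ass_loc (p : Ideal R) [p.IsPrime]
    {M0 M1 M2 L0 L1 L2 : Type u} [AddCommGroup M0] [Module R M0] [AddCommGroup M1] [Module R M1]
  [AddCommGroup M2] [Module R M2]
  [AddCommGroup L0] [Module R L0] [Module (Localization.AtPrime p) L0] [IsScalarTower R (Localization.AtPrime p) L0]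
  [AddCommGroup L1] [Module R L1] [Module (Localization.AtPrime p) L1] [IsScalarTower R (Localization.AtPrime p) L1]
  [AddCommGroup L2] [Module R L2] [Module (Localization.AtPrime p) L2] [IsScalarTower R (Localization.AtPrime p) L2]
  (f0 : M0 →ₗ[R] L0) [IsLocalizedModule p.primeCompl f0] (f1 : M1 →ₗ[R] L1)
  [IsLocalizedModule p.primeCompl f1] (f2 : M2 →ₗ[R] L2)
  {h : M0 →ₗ[R] M1} {h' : L0 →ₗ[Localization.AtPrime p] L1} (hh : ∀ x, h' (f0 x) = f1 (h x))
    {k : M1 →ₗ[R] M2} {k' : L1 →ₗ[Localization.AtPrime p] L2} (kk : ∀ x, k' (f1 x) = f2 (k x))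
    (c : M1) (hc : k c = 0) (hcp : ∀ r : R, r • c ∈ LinearMap.range h ↔ r ∈ p) :
    (¬ Function.Exact h' k') ∧
    ¬ EV (Localization.AtPrime p) 0 (Localization.AtPrime p ⧸ IsLocalRing.maximalIdeal (Localization.AtPrime p))
      (L1 ⧸ LinearMap.range h') := by
  have hnot : f1 c ∉ LinearMap.range h' := by
    rintro ⟨y, hy⟩
    obtain ⟨⟨x, s⟩, hx⟩ := IsLocalizedModule.surj p.primeCompl f0 y
    have h1 : f1 (s.1 • c - h x) = 0 := by
      rw [map_sub, map_smul, ← hh, ← hy]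
      change s.1 • y = f0 x at hx
      rw [← hx, ← algebraMap_smul (Localization.AtPrime p) s.1 (h' y), ← map_smul, algebraMap_smul,
        sub_self]
    obtain ⟨t, ht⟩ := (IsLocalizedModule.eq_zero_iff p.primeCompl f1).1 h1
    change t.1 • (s.1 • c - h x) = 0 at ht
    have h2 : (t.1 * s.1) • c ∈ LinearMap.range h := by
      refine ⟨t.1 • x, ?_⟩
      rw [smul_sub, sub_eq_zero] at ht
      rw [map_smul, ← ht, mul_smul]
    have h3 := (hcp _).1 h2
    exact (p.primeCompl.mul_mem t.2 s.2) h3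
  refine ⟨fun he => hnot ((he (f1 c)).1 (by rw [kk, hc, map_zero])), fun hE => ?_⟩
  rw [EV.zero_iff] at hE
  let v : L1 ⧸ LinearMap.range h' := Submodule.Quotient.mk (f1 c)
  have hv : IsLocalRing.maximalIdeal (Localization.AtPrime p) ≤
      LinearMap.ker (LinearMap.toSpanSingleton (Localization.AtPrime p) _ v) := by
    rw [← Localization.AtPrime.map_eq_maximalIdeal, Ideal.map_le_iff_le_comap]
    intro r hr
    rw [Ideal.mem_comap]
    change algebraMap R (Localization.AtPrime p) r • v = 0
    obtain ⟨x, hx⟩ := (hcp r).2 hr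
    rw [← Submodule.Quotient.mk_smul, Submodule.Quotient.mk_eq_zero]
    refine ⟨f0 x, ?_⟩
    rw [hh, hx, map_smul, algebraMap_smul]
  have := LinearMap.congr_fun (hE (Submodule.liftQ _ _ hv)) (Submodule.Quotient.mk 1)
  have h4 : (LinearMap.toSpanSingleton (Localization.AtPrime p) _ v) 1 = 0 := this
  rw [LinearMap.toSpanSingleton_apply, one_smul, Submodule.Quotient.mk_eq_zero] at h4
  exact hnot h4

namespace MinRes
variable {M : Type u} [AddCommGroup M] [Module R M] (F : MinRes R M) (S : Submonoid R)

/-- localized terms -/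
noncomputable def lP (i : ℕ) : ModuleCat.{u} (Localization S) :=
  ModuleCat.of _ (LocalizedModule S (F.P i))

/-- localized differential -/
noncomputable def ld (i : ℕ) : LocalizedModule S (F.P (i+1)) →ₗ[Localization S] LocalizedModule S (F.P i) :=
  lmap S (LocalizedModule.mkLinearMap S (F.P (i+1))) (LocalizedModule.mkLinearMap S (F.P i)) (F.d i)

lemma ld_nat (i : ℕ) (x : F.P (i+1)) : F.ld S i (LocalizedModule.mkLinearMap S (F.P (i+1)) x) =
    LocalizedModule.mkLinearMap S (F.P i) (F.d i x) := lmap_apply _ _ _ _ _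

/-- dual of localization -/
noncomputable abbrev g (i : ℕ) : Module.Dual R (F.P i) →ₗ[R] Module.Dual (Localization S) (LocalizedModule S (F.P i)) :=
  dl S (LocalizedModule.mkLinearMap S (F.P i))

lemma ld_dual (i : ℕ) (φ : Module.Dual R (F.P i)) :
    (F.ld S i).dualMap (F.g S i φ) = F.g S (i+1) ((F.d i).dualMap φ) :=
  dl_nat S _ _ (F.ld_nat S i) φ

lemma crit (i : ℕ) : EV R (i+1) M R ↔ Function.Exact (F.d i).dualMap (F.d (i+1)).dualMap :=
  res_crit' i F.P M F.projective F.d F.ε F.surj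
    (LinearMap.exact_iff.2 F.exact0.symm) (fun j => LinearMap.exact_iff.2 (F.exact j).symm)

lemma critL (i : ℕ) : EV (Localization S) (i+1) (LocalizedModule S M) (Localization S) ↔
    Function.Exact (F.ld S i).dualMap (F.ld S (i+1)).dualMap := by
  have hP : ∀ i, Module.Projective (Localization S) (LocalizedModule S (F.P i)) := by
    intro i
    have := F.projective i
    exact Module.projective_of_isLocalizedModule S (LocalizedModule.mkLinearMap S (F.P i))
  obtain ⟨ε', hε⟩ := lmap_ex S (LocalizedModule.mkLinearMap S (F.P 0)) (LocalizedModule.mkLinearMap S M) F.ε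
  have h1 := loc_surj S _ _ hε F.surj
  have h2 := loc_exact S _ _ _ (F.ld_nat S 0) hε (LinearMap.exact_iff.2 F.exact0.symm)
  have h3 := fun j => loc_exact S _ _ _ (F.ld_nat S (j+1)) (F.ld_nat S j)
    (LinearMap.exact_iff.2 (F.exact j).symm)
  exact res_crit' i (F.lP S) (LocalizedModule S M) hP (F.ld S) ε' h1 h2 h3

/-- localized dual terms -/
noncomputable def lD (i : ℕ) : ModuleCat.{u} (Localization S) :=
  ModuleCat.of _ (Module.Dual (Localization S) (LocalizedModule S (F.P i)))

lemma lam_equiv [IsNoetherianRing R] : Nonempty (LocalizedModule S F.lambdaMod ≃ₗ[Localization S]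
    LinearMap.range (F.ld S 0).dualMap) := by
  have := F.finite
  let j : F.lambdaMod →ₗ[R] Module.Dual R (F.P 1) := (LinearMap.range (F.d 0).dualMap).subtype
  let q : Module.Dual R (F.P 0) →ₗ[R] F.lambdaMod := (F.d 0).dualMap.rangeRestrict
  have hj : Function.Injective j := Subtype.val_injective
  have hq : Function.Surjective q := LinearMap.surjective_rangeRestrict _
  have hjq : ∀ x, j (q x) = (F.d 0).dualMap x := fun x => rfl
  obtain ⟨j', hj'⟩ := lmap_ex S (LocalizedModule.mkLinearMap S F.lambdaMod) (F.g S 1) j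
  obtain ⟨q', hq'⟩ := lmap_ex S (F.g S 0) (LocalizedModule.mkLinearMap S F.lambdaMod) q
  have h1 := loc_inj S _ _ hj' hj
  have h2 := loc_surj S _ _ hq' hq
  have h3 : j' ∘ₗ q' = (F.ld S 0).dualMap := by
    apply loc_ext S (F.g S 0)
    intro x
    rw [LinearMap.comp_apply, hq', hj', hjq, ld_dual]
  have h4 : LinearMap.range j' = LinearMap.range (F.ld S 0).dualMap := by
    rw [← h3, LinearMap.range_comp, LinearMap.range_eq_top.2 h2, Submodule.map_top]
  exact ⟨(LinearEquiv.ofInjective j' h1).trans (LinearEquiv.ofEq _ _ h4)⟩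

lemma lD_ev [IsNoetherianRing R] {Y : Type u} [AddCommGroup Y] [Module (Localization S) Y] (i j : ℕ)
    (h : EV (Localization S) j Y (Localization S)) : EV (Localization S) j Y (F.lD S i) := by
  have := F.projective i
  have := F.finite i
  exact finproj_dual (IsLocalization.isNoetherianRing S _ inferInstance)
    (Module.Finite.of_isLocalizedModule (Rₚ := Localization S) S (LocalizedModule.mkLinearMap S (F.P i)))
    (Module.projective_of_isLocalizedModule (Rₛ := Localization S) S
      (LocalizedModule.mkLinearMap S (F.P i))) h

lemma stepA [IsNoetherianRing R] [Module.Finite R M] {Y : Type u} [AddCommGroup Y]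
    [Module (Localization S) Y] (m : ℕ)
    (hE : ∀ i, i + 1 < m → EV R (i+1) M R)
    (hd : ∀ j < m, EV (Localization S) j Y (Localization S)) (j : ℕ) (hj : j < m) :
    EV (Localization S) j Y (LocalizedModule S F.lambdaMod) := by
  obtain ⟨e⟩ := F.lam_equiv S
  obtain ⟨r, rfl⟩ : ∃ r, m = r + 1 := ⟨m - 1, by omega⟩
  refine EV.congr_right (M := LinearMap.range (F.ld S 0).dualMap) e.symm ?_
  exact cpx_depth (F.lD S) (fun i => (F.ld S i).dualMap) (r+1)
    (fun i j hj => F.lD_ev S i j (hd j hj))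
    (fun i hi => (F.critL S i).1 (EV_loc S i M _ (LocalizedModule.mkLinearMap S M) (hE i hi)))
    r 0 (by omega) j hj

lemma stepB [IsNoetherianRing R] [Module.Finite R M] {Y : Type u} [AddCommGroup Y]
    [Module (Localization S) Y] (m : ℕ)
    (hE : ∀ i, i < m → EV R (i+1) M R)
    (hd : ∀ j < m + 1, EV (Localization S) j Y (Localization S))
    (h : EV (Localization S) (m+1) Y (LocalizedModule S F.lambdaMod)) :
    EV (Localization S) 0 Y (Module.Dual (Localization S) (LocalizedModule S (F.P (m+1))) ⧸
      LinearMap.range (F.ld S m).dualMap) := by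
  obtain ⟨e⟩ := F.lam_equiv S
  exact cpx_depth2 (F.lD S) (fun i => (F.ld S i).dualMap) (m+1)
    (fun i j hj => F.lD_ev S i j (hd j hj))
    (fun i hi => (F.critL S i).1 (EV_loc S i M _ (LocalizedModule.mkLinearMap S M) (hE i (by omega))))
    m rfl m 0 (by omega) (EV.congr_right (N := LinearMap.range (F.ld S 0).dualMap) e h)

end MinRes

lemma gdim_zero_iff (A X : Type u) [CommRing A] [AddCommGroup X] [Module A X] :
    GDim A X = 0 ↔ IsGDimZero A X := by
  unfold GDim
  rw [ENat.sInf_eq_zero]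
  constructor
  · rintro ⟨k, hk, h⟩
    obtain rfl : k = 0 := by exact_mod_cast hk.symm
    exact h
  · intro h
    exact ⟨0, by simp, h⟩

theorem main_thm [IsNoetherianRing R] (M : Type u) [AddCommGroup M] [Module R M] [Module.Finite R M]
    (F : MinRes R M) (hfin : GDim R M < ⊤) :
    rgr R M = sInf {n : ℕ∞ | ∃ (p : Ideal R) (h : p.IsPrime), haveI := h;
      locGDim R p M ≠ 0 ∧ n = locDepth R p F.lambdaMod} := by
  obtain ⟨_, ⟨g, rfl, hg⟩, _⟩ := sInf_lt_iff.1 hfin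
  have hgl : ∀ (p : Ideal R) [p.IsPrime], GDimLE (Localization.AtPrime p) g
      (ModuleCat.of _ (LocalizedModule p.primeCompl M)) := fun p _ =>
    gdimLE_loc p.primeCompl g M _ (LocalizedModule.mkLinearMap p.primeCompl M) hg
  have hdep : ∀ (p : Ideal R) [p.IsPrime] (m : ℕ),
      ¬ IsGDimZero (Localization.AtPrime p) (LocalizedModule p.primeCompl M) →
      (∀ i, i + 1 < m → EV R (i+1) M R) → ∀ j < m, EV (Localization.AtPrime p) j
      (Localization.AtPrime p ⧸ IsLocalRing.maximalIdeal (Localization.AtPrime p))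
      (Localization.AtPrime p) := by
    intro p _ m hn hE j hj
    have : IsNoetherianRing (Localization.AtPrime p) :=
      IsLocalization.isNoetherianRing p.primeCompl _ inferInstance
    exact depth_bound (hgl p) hn
      (fun i hi => EV_loc p.primeCompl i M _ (LocalizedModule.mkLinearMap p.primeCompl M) (hE i hi)) j hj
  apply le_antisymm
  · refine le_sInf ?_
    rintro _ ⟨p, hp, hne, rfl⟩
    refine le_sInf ?_
    rintro _ ⟨k, rfl, hk⟩
    by_contra! hlt
    have hE : ∀ i, i + 1 < k + 1 → EV R (i+1) M R := by
      intro i hi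
      by_contra hcon
      rw [← extM_iff] at hcon
      have h1 : rgr R M ≤ ((i+1 : ℕ) : ℕ∞) := sInf_le ⟨i+1, rfl, by omega, hcon⟩
      have h2 : ((i+1 : ℕ) : ℕ∞) ≤ k := by exact_mod_cast (by omega : i + 1 ≤ k)
      exact absurd (h1.trans h2) (not_le.2 hlt)
    apply hk
    rw [extM_iff]
    have hn : ¬ IsGDimZero (Localization.AtPrime p) (LocalizedModule p.primeCompl M) :=
      fun h => hne ((gdim_zero_iff _ _).2 h)
    exact F.stepA p.primeCompl (k+1) hE (hdep p (k+1) hn hE) k (by omega)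
  · refine le_sInf ?_
    rintro _ ⟨k, rfl, hk0, hk⟩
    classical
    have hex : ∃ m, ¬ EV R (m+1) M R := ⟨k - 1, by
      rw [← extM_iff, show k - 1 + 1 = k by omega]; exact hk⟩
    obtain ⟨m, hm, hmin, hmk⟩ : ∃ m, ¬ EV R (m+1) M R ∧ (∀ i < m, EV R (i+1) M R) ∧ m + 1 ≤ k := by
      refine ⟨Nat.find hex, Nat.find_spec hex, fun i hi => not_not.1 (Nat.find_min hex hi), ?_⟩
      have : Nat.find hex ≤ k - 1 := Nat.find_min' hex (by
        rw [← extM_iff, show k - 1 + 1 = k by omega]; exact hk)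
      omega
    have hne := hm
    rw [F.crit] at hne
    obtain ⟨p, hp, c, hc, hcp⟩ := ass_ex (F.d m).dualMap (F.d (m+1)).dualMap (by
      intro φ
      ext x
      have : F.d m (F.d (m+1) x) = 0 := (LinearMap.exact_iff.2 (F.exact m).symm).apply_apply_eq_zero x
      simp [this]) hne
    have := F.finite
    obtain ⟨h1, h2⟩ := ass_loc p (F.g p.primeCompl m) (F.g p.primeCompl (m+1))
      (F.g p.primeCompl (m+2)) (F.ld_dual p.primeCompl m) (F.ld_dual p.primeCompl (m+1)) c hc hcp
    have hn : ¬ IsGDimZero (Localization.AtPrime p) (LocalizedModule p.primeCompl M) := fun h =>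
      h1 ((F.critL p.primeCompl m).1 ((isG_iff.1 h).2.2.1 m))
    refine sInf_le_of_le ⟨p, hp, fun h => hn ((gdim_zero_iff _ _).1 h), rfl⟩ ?_
    have h3 : ((m + 1 : ℕ) : ℕ∞) ≤ k := by exact_mod_cast hmk
    refine le_trans ?_ h3
    refine sInf_le ⟨m+1, rfl, fun h => ?_⟩
    rw [extM_iff] at h
    exact h2 (F.stepB p.primeCompl m hmin (hdep p (m+1) hn (fun i hi => hmin i (by omega))) h)

end HelpF


section Statements

variable (R : Type u) [CommRing R] [IsNoetherianRing R]

theorem stmt2 (M : Type u) [AddCommGroup M] [Module R M] [Module.Finite R M]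
    (F : MinRes R M) (hHL : IsHorizontallyLinked R M) (hfin : GDim R M < ⊤) :
    rgr R M = sInf {n : ℕ∞ | ∃ (p : Ideal R) (h : p.IsPrime), haveI := h;
      locGDim R p M ≠ 0 ∧ n = locDepth R p F.lambdaMod} := by
  exact main_thm M F hfin

end Statements
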